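/- Let N ≥ 3, let ω : [0,∞) → ℝ³ be uniformly continuous and bounded, let R : [0,∞) → SO(3) be differentiable with Ṙ(t) = R(t)ω(t)^×, let R_c ∈ SO(3), and let z₁,…,z_N : [0,∞) → S² be continuous. Assume the persistency-of-excitation condition: there exist δ₀, μ₀ > 0 such that for each i ∈ {1,…,N} and all t ≥ 0, ∫_t^{t+δ₀} π(R(τ)R_c z_i(τ)) dτ ≥ μ₀ I₃ (in the positive semidefinite order). Define Π_{z_i}(t) := π(R_c z_i(t)), Λ_z(t) := blkdiag(Π_{z₁}(t),…,Π_{z_N}(t)) ∈ ℝ^{3N×3N}, A_ω(t) := blkdiag(ω(t)^×,…,ω(t)^×) ∈ ℝ^{3N×3N}, Γ := [I₃;…;I₃] ∈ ℝ^{3N×3} (N stacked copies of I₃), A(t) := [[−A_ω(t), −Γ, 0_{3N×3}],[0_{3×3N}, −ω(t)^×, I₃],[0_{3×3N}, 0_{3×3}, −ω(t)^×]] ∈ ℝ^{(3N+6)×(3N+6)}, and C(t) := [Λ_z(t), 0_{3N×3}, 0_{3N×3}] ∈ ℝ^{3N×(3N+6)}. Let Φ(t,τ) be the state transition matrix of A,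 i.e., a continuous family of matrices with ∂Φ(t,τ)/∂t = A(t)Φ(t,τ) and Φ(τ,τ) = I_{3N+6} for all t,τ ≥ 0. Then the pair (A,C) is uniformly observable: there exist constants δ, μ > 0 such that for all t ≥ 0, (1/δ)∫_t^{t+δ} Φ(τ,t)ᵀ C(τ)ᵀ C(τ) Φ(τ,t) dτ ≥ μ I_{3N+6} in the positive semidefinite order. -/

import Mathlib

open Matrix MeasureTheory

noncomputable section

/-- `SO(3)`: rotation matrices. -/
def SO3 (R : Matrix (Fin 3) (Fin 3) ℝ) : Prop :=
  R * Rᵀ = 1 ∧ Rᵀ * R = 1 ∧ R.det = 1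

/-- Skew-symmetric matrix `u^×` with `u^× y = u × y`. -/
def skew (u : Fin 3 → ℝ) : Matrix (Fin 3) (Fin 3) ℝ :=
  !![0, -u 2, u 1; u 2, 0, -u 0; -u 1, u 0, 0]

/-- `π(x) = I₃ - x xᵀ`: orthogonal projection onto the plane orthogonal to `x`. -/
def projMat (x : Fin 3 → ℝ) : Matrix (Fin 3) (Fin 3) ℝ :=
  1 - Matrix.vecMulVec x x

/-- Index type for `ℝ^{3N+6}`: `N` blocks of size 3 (landmarks), plus two blocks
of size 3 (velocity and gravity). -/
abbrev StateIdx (N : ℕ) := (Fin N × Fin 3) ⊕ (Fin 3 ⊕ Fin 3)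

/-- Index type for `ℝ^{3N}`: `N` blocks of size 3. -/
abbrev OutIdx (N : ℕ) := Fin N × Fin 3

/-- Block-diagonal `3N × 3N` matrix with (possibly different) `3×3` blocks. -/
def blkDiag {N : ℕ} (f : Fin N → Matrix (Fin 3) (Fin 3) ℝ) :
    Matrix (Fin N × Fin 3) (Fin N × Fin 3) ℝ :=
  fun p q => if p.1 = q.1 then f p.1 p.2 q.2 else 0

/-- `Γ = [I₃; …; I₃]` (`N` stacked copies of `I₃`). -/
def Gam (N : ℕ) : Matrix (Fin N × Fin 3) (Fin 3) ℝ :=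
  fun p b => if p.2 = b then 1 else 0

/-- The system matrix
`A(ω) = [[-A_ω, -Γ, 0], [0, -ω^×, I₃], [0, 0, -ω^×]]` with
`A_ω = blkdiag(ω^×, …, ω^×)`. -/
def Amat (N : ℕ) (ω : Fin 3 → ℝ) : Matrix (StateIdx N) (StateIdx N) ℝ :=
  Matrix.fromBlocks
    (blkDiag fun _ => -(skew ω))
    (fun p q => Sum.elim (fun b => -(Gam N p b)) (fun _ => (0:ℝ)) q)
    0
    (Matrix.fromBlocks (-(skew ω)) 1 0 (-(skew ω)))

/-- The output matrix `C = [Λ_z, 0, 0]` with `Λ_z = blkdiag(Π_{z₁}, …, Π_{z_N})`,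
`Π_{z_i} = π(R_c z_i)`. -/
def Cmat (N : ℕ) (Rc : Matrix (Fin 3) (Fin 3) ℝ) (z : Fin N → Fin 3 → ℝ) :
    Matrix (OutIdx N) (StateIdx N) ℝ :=
  fun p q => Sum.elim (fun q' => blkDiag (fun i => projMat (Rc *ᵥ z i)) p q') (fun _ => 0) q

/-!
Let `R` be the attitude and `R_c` the constant rotation. Multiplied by `R`, the velocity and
gravity equations become `v' = g` and `g' = 0`, so in the inertial frame every landmark moves along
a quadratic polynomial `q`, whose coefficients determine the initial state. The rotated output has
squared norm `q ⬝ᵥ Λ q`, where `Λ` is built from the persistently exciting projections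
`projMat (R R_c z_i)`. It remains to see that persistency of excitation, a statement about constant
vectors, extends to polynomial curves over a long enough time window.
-/
lemma dotProduct_self_nonneg {n : Type*} [Fintype n] (u : n → ℝ) : 0 ≤ u ⬝ᵥ u := by
  simpa using dotProduct_self_star_nonneg u

lemma mulVec_dotProduct_mulVec_of_transpose_mul_self {n : Type*} [Fintype n] [DecidableEq n]
    {Q : Matrix n n ℝ} (hQ : Qᵀ * Q = 1) (u v : n → ℝ) : (Q *ᵥ u) ⬝ᵥ (Q *ᵥ v) = u ⬝ᵥ v := by
  rw [dotProduct_mulVec, vecMul_mulVec, hQ, vecMul_one]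

section PolynomialCurves

variable {n : Type*}

/-- The vector-valued polynomial `s ↦ ∑ k, s ^ k • a k` with coefficients `a`. The lowest
coefficient comes first and the degree is less than `m`. -/
def polyCurve {m : ℕ} (a : Fin m → n → ℝ) (s : ℝ) : n → ℝ :=
  ∑ k : Fin m, s ^ (k : ℕ) • a k

lemma polyCurve_mul {m : ℕ} (a : Fin m → n → ℝ) (T s : ℝ) :
    polyCurve a (T * s) = polyCurve (fun k => T ^ (k : ℕ) • a k) s := by
  simp only [polyCurve, mul_pow, smul_smul, mul_comm]

lemma continuous_polyCurve {m : ℕ} (a : Fin m → n → ℝ) : Continuous (polyCurve a) := by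
  unfold polyCurve
  fun_prop

lemma exists_eq_sum_smul_polyCurve (m : ℕ) :
    ∃ W : Matrix (Fin m) (Fin m) ℝ, ∀ (a : Fin m → n → ℝ) k,
      a k = ∑ j, W k j • polyCurve a (j : ℕ) := by
  set V : Matrix (Fin m) (Fin m) ℝ := vandermonde fun j => ((j : ℕ) : ℝ)
  have hV : IsUnit V.det := isUnit_iff_ne_zero.2 <| det_vandermonde_ne_zero_iff.2 <|
    Nat.cast_injective.comp Fin.val_injective
  refine ⟨V⁻¹, fun a k => ?_⟩
  calc a k = ∑ l, (V⁻¹ * V) k l • a l := by simp [nonsing_inv_mul V hV, one_apply]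
    _ = ∑ l, ∑ j, (V⁻¹ k j * V j l) • a l := by simp only [mul_apply, Finset.sum_smul]
    _ = ∑ j, V⁻¹ k j • polyCurve a (j : ℕ) := by
      rw [Finset.sum_comm]
      simp only [polyCurve, Finset.smul_sum, smul_smul, V, vandermonde_apply]

variable [Fintype n]

lemma sum_smul_dotProduct_self_le {ι : Type*} [Fintype ι] (c : ι → ℝ) (a : ι → n → ℝ) :
    (∑ k, c k • a k) ⬝ᵥ (∑ k, c k • a k) ≤ (∑ k, c k ^ 2) * ∑ k, a k ⬝ᵥ a k := by
  simp only [dotProduct, ← sq, Finset.sum_apply, Pi.smul_apply, smul_eq_mul]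
  rw [Finset.sum_comm, Finset.mul_sum]
  exact Finset.sum_le_sum fun j _ => Finset.sum_mul_sq_le_sq_mul_sq _ _ _

lemma exists_coeff_le_of_polyCurve_le (m : ℕ) [NeZero m] :
    ∃ C > (0 : ℝ), ∀ (a : Fin m → n → ℝ) (B : ℝ),
      (∀ j : Fin m, polyCurve a (j : ℕ) ⬝ᵥ polyCurve a (j : ℕ) ≤ B) →
        ∑ k, a k ⬝ᵥ a k ≤ C * B := by
  obtain ⟨W, hW⟩ := exists_eq_sum_smul_polyCurve (n := n) m
  refine ⟨(∑ k, ∑ j, W k j ^ 2) * m + 1, by positivity, fun a B hB => ?_⟩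
  have hB₀ : 0 ≤ B := (dotProduct_self_nonneg _).trans (hB 0)
  calc ∑ k, a k ⬝ᵥ a k
      ≤ ∑ k, (∑ j, W k j ^ 2) * ∑ j : Fin m, polyCurve a (j : ℕ) ⬝ᵥ polyCurve a (j : ℕ) := by
        gcongr with k
        conv_lhs => rw [hW a k]
        exact sum_smul_dotProduct_self_le _ _
    _ ≤ ∑ k, (∑ j, W k j ^ 2) * (m * B) := by
        gcongr with k
        simpa using Finset.sum_le_sum fun j (_ : j ∈ Finset.univ) => hB j
    _ ≤ ((∑ k, ∑ j, W k j ^ 2) * m + 1) * B := by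
        rw [← Finset.sum_mul]
        linarith

lemma exists_polyCurve_sub_le (m : ℕ) :
    ∃ K ≥ (0 : ℝ), ∀ (a : Fin m → n → ℝ), ∀ x ∈ Set.Icc (0 : ℝ) m, ∀ y ∈ Set.Icc (0 : ℝ) m,
      (polyCurve a x - polyCurve a y) ⬝ᵥ (polyCurve a x - polyCurve a y)
        ≤ K * (x - y) ^ 2 * ∑ k, a k ⬝ᵥ a k := by
  refine ⟨∑ k : Fin m, ((k : ℕ) * (m : ℝ) ^ ((k : ℕ) - 1)) ^ 2, by positivity,
    fun a x hx y hy => ?_⟩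
  have hsub : polyCurve a x - polyCurve a y =
      ∑ k : Fin m, (x ^ (k : ℕ) - y ^ (k : ℕ)) • a k := by
    simp only [polyCurve, sub_smul, Finset.sum_sub_distrib]
  rw [hsub]
  refine (sum_smul_dotProduct_self_le _ _).trans ?_
  refine mul_le_mul_of_nonneg_right ?_ (Finset.sum_nonneg fun k _ => dotProduct_self_nonneg _)
  rw [Finset.sum_mul]
  refine Finset.sum_le_sum fun k _ => ?_
  rw [← mul_pow, sq_le_sq, abs_mul]
  refine (abs_pow_sub_pow_le x y k).trans ?_
  have hmax : max |x| |y| ≤ m := by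
    rw [abs_of_nonneg hx.1, abs_of_nonneg hy.1]
    exact max_le hx.2 hy.2
  rw [abs_of_nonneg (by positivity : (0 : ℝ) ≤ (k : ℕ) * (m : ℝ) ^ ((k : ℕ) - 1)), mul_assoc,
    mul_comm]
  gcongr

lemma exists_polyCurve_sub_sample_le (m : ℕ) :
    ∃ K : ℝ, ∀ (a : Fin m → n → ℝ) {T δ : ℝ}, 0 < T → δ ≤ T → ∀ j : Fin m,
      ∀ s ∈ Set.Icc (T * (j : ℕ)) (T * (j : ℕ) + δ),
        (polyCurve a s - polyCurve a (T * (j : ℕ))) ⬝ᵥ (polyCurve a s - polyCurve a (T * (j : ℕ)))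
          ≤ K * (δ / T) ^ 2 * ∑ k : Fin m, (T ^ (k : ℕ) • a k) ⬝ᵥ (T ^ (k : ℕ) • a k) := by
  obtain ⟨K, hK, hlip⟩ := exists_polyCurve_sub_le (n := n) m
  refine ⟨K, fun a T δ hT hδT j s hs => ?_⟩
  have hj : ((j : ℕ) : ℝ) + 1 ≤ m := mod_cast j.isLt
  obtain ⟨x, rfl⟩ : ∃ x, T * x = s := ⟨s / T, mul_div_cancel₀ s hT.ne'⟩
  have hjx : (j : ℕ) ≤ x := le_of_mul_le_mul_left hs.1 hT
  have hxj : x - (j : ℕ) ≤ δ / T := by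
    rw [le_div_iff₀ hT]
    linarith [hs.2]
  have hδT₁ : δ / T ≤ 1 := (div_le_one hT).2 hδT
  rw [polyCurve_mul, polyCurve_mul]
  refine (hlip _ x ⟨(Nat.cast_nonneg _).trans hjx, by linarith⟩ j
    ⟨Nat.cast_nonneg _, by linarith⟩).trans ?_
  have hS : 0 ≤ ∑ k : Fin m, (T ^ (k : ℕ) • a k) ⬝ᵥ (T ^ (k : ℕ) • a k) :=
    Finset.sum_nonneg fun k _ => dotProduct_self_nonneg _
  have : 0 ≤ x - (j : ℕ) := sub_nonneg.2 hjx
  gcongr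

lemma sum_dotProduct_self_le_of_one_le {m : ℕ} {T : ℝ} (hT : 1 ≤ T) (a : Fin m → n → ℝ) :
    ∑ k, a k ⬝ᵥ a k ≤ ∑ k : Fin m, (T ^ (k : ℕ) • a k) ⬝ᵥ (T ^ (k : ℕ) • a k) := by
  gcongr with k
  rw [smul_dotProduct, dotProduct_smul, smul_smul, smul_eq_mul, ← mul_pow]
  exact le_mul_of_one_le_left (dotProduct_self_nonneg _)
    (one_le_pow₀ (one_le_mul_of_one_le_of_one_le hT hT))

end PolynomialCurves

section PersistentExcitation

variable {n : Type*} [Fintype n]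

lemma continuousOn_dotProduct_mulVec {P : ℝ → Matrix n n ℝ} {q : ℝ → n → ℝ} {s : Set ℝ}
    (hP : ContinuousOn P s) (hq : ContinuousOn q s) :
    ContinuousOn (fun τ => q τ ⬝ᵥ (P τ *ᵥ q τ)) s := by
  rw [continuousOn_iff_continuous_domRestrict] at hP hq ⊢
  exact hq.dotProduct (hP.matrix_mulVec hq)

lemma half_dotProduct_mulVec_sub_le {P : Matrix n n ℝ} (hP : ∀ u, 0 ≤ u ⬝ᵥ (P *ᵥ u))
    (u v : n → ℝ) :
    v ⬝ᵥ (P *ᵥ v) / 2 - (u - v) ⬝ᵥ (P *ᵥ (u - v)) ≤ u ⬝ᵥ (P *ᵥ u) := by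
  have parallelogram : (2 • u - v) ⬝ᵥ (P *ᵥ (2 • u - v)) + v ⬝ᵥ (P *ᵥ v)
      = 2 * (u ⬝ᵥ (P *ᵥ u)) + 2 * ((u - v) ⬝ᵥ (P *ᵥ (u - v))) := by
    simp only [two_smul, mulVec_sub, mulVec_add, dotProduct_sub, sub_dotProduct, dotProduct_add,
      add_dotProduct]
    ring
  linarith [hP (2 • u - v)]

/-- Persistency of excitation with window `δ` and level `μ` of a matrix-valued signal on
`[0, ∞)` whose quadratic forms lie between `0` and the squared norm. The matrix inequalities are
encoded through quadratic forms, without requiring symmetry. -/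
structure IsPersistentlyExciting (P : ℝ → Matrix n n ℝ) (δ μ : ℝ) : Prop where
  continuousOn : ContinuousOn P (Set.Ici 0)
  nonneg : ∀ t ≥ 0, ∀ u, 0 ≤ u ⬝ᵥ (P t *ᵥ u)
  le_dotProduct_self : ∀ t ≥ 0, ∀ u, u ⬝ᵥ (P t *ᵥ u) ≤ u ⬝ᵥ u
  le_integral : ∀ t ≥ 0, ∀ u, μ * (u ⬝ᵥ u) ≤ ∫ τ in t..(t + δ), u ⬝ᵥ (P τ *ᵥ u)

namespace IsPersistentlyExciting

variable {P : ℝ → Matrix n n ℝ} {δ μ : ℝ}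

lemma intervalIntegrable (hP : IsPersistentlyExciting P δ μ) {q : ℝ → n → ℝ} (hq : Continuous q)
    {l r : ℝ} (hl : 0 ≤ l) (hr : 0 ≤ r) :
    IntervalIntegrable (fun τ => q τ ⬝ᵥ (P τ *ᵥ q τ)) volume l r :=
  ((continuousOn_dotProduct_mulVec hP.continuousOn hq.continuousOn).mono
    (Set.ordConnected_Ici.uIcc_subset hl hr)).intervalIntegrable

lemma le_integral_of_near_const (hP : IsPersistentlyExciting P δ μ) (hδ : 0 ≤ δ)
    {q : ℝ → n → ℝ} (hq : Continuous q) {t : ℝ} (ht : 0 ≤ t) {v : n → ℝ} {ε : ℝ}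
    (hε : ∀ τ ∈ Set.Icc t (t + δ), (q τ - v) ⬝ᵥ (q τ - v) ≤ ε) :
    μ / 2 * (v ⬝ᵥ v) - δ * ε ≤ ∫ τ in t..(t + δ), q τ ⬝ᵥ (P τ *ᵥ q τ) := by
  have htδ : 0 ≤ t + δ := add_nonneg ht hδ
  have hv := (hP.intervalIntegrable (continuous_const (y := v)) ht htδ).div_const 2
  have hpointwise : ∀ τ ∈ Set.Icc t (t + δ),
      v ⬝ᵥ (P τ *ᵥ v) / 2 - ε ≤ q τ ⬝ᵥ (P τ *ᵥ q τ) := fun τ hτ => by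
    have hτ₀ : 0 ≤ τ := ht.trans hτ.1
    linarith [half_dotProduct_mulVec_sub_le (hP.nonneg τ hτ₀) (q τ) v,
      hP.le_dotProduct_self τ hτ₀ (q τ - v), hε τ hτ]
  calc μ / 2 * (v ⬝ᵥ v) - δ * ε
      ≤ (∫ τ in t..(t + δ), v ⬝ᵥ (P τ *ᵥ v)) / 2 - δ * ε := by linarith [hP.le_integral t ht v]
    _ = ∫ τ in t..(t + δ), (v ⬝ᵥ (P τ *ᵥ v) / 2 - ε) := by
      rw [intervalIntegral.integral_sub hv intervalIntegrable_const,
        intervalIntegral.integral_div, intervalIntegral.integral_const, smul_eq_mul,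
        add_sub_cancel_left]
    _ ≤ ∫ τ in t..(t + δ), q τ ⬝ᵥ (P τ *ᵥ q τ) :=
      intervalIntegral.integral_mono_on (le_add_of_nonneg_right hδ)
        (hv.sub intervalIntegrable_const) (hP.intervalIntegrable hq ht htδ) hpointwise

lemma integral_mono_interval (hP : IsPersistentlyExciting P δ μ) {q : ℝ → n → ℝ}
    (hq : Continuous q) {a b c d : ℝ} (ha : 0 ≤ a) (hac : a ≤ c) (hcd : c ≤ d) (hdb : d ≤ b) :
    ∫ τ in c..d, q τ ⬝ᵥ (P τ *ᵥ q τ) ≤ ∫ τ in a..b, q τ ⬝ᵥ (P τ *ᵥ q τ) :=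
  intervalIntegral.integral_mono_interval hac hcd hdb
    ((ae_restrict_iff' measurableSet_Ioc).2 <| .of_forall fun τ hτ =>
      hP.nonneg τ (ha.trans hτ.1.le) _)
    (hP.intervalIntegrable hq ha (ha.trans (hac.trans (hcd.trans hdb))))

lemma le_integral_of_near_sample (hP : IsPersistentlyExciting P δ μ) (hδ : 0 ≤ δ)
    {q : ℝ → n → ℝ} (hq : Continuous q) {t σ L ε : ℝ} (ht : 0 ≤ t) (hσ : 0 ≤ σ) (hL : σ + δ ≤ L)
    (hε : ∀ s ∈ Set.Icc σ (σ + δ), (q s - q σ) ⬝ᵥ (q s - q σ) ≤ ε) :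
    μ / 2 * (q σ ⬝ᵥ q σ) - δ * ε ≤ ∫ τ in t..(t + L), q (τ - t) ⬝ᵥ (P τ *ᵥ q (τ - t)) := by
  have hqt : Continuous fun τ => q (τ - t) := hq.comp (continuous_id.sub continuous_const)
  exact (hP.le_integral_of_near_const hδ hqt (add_nonneg ht hσ) fun τ hτ =>
    hε _ ⟨by linarith [hτ.1], by linarith [hτ.2]⟩).trans
      (hP.integral_mono_interval hqt ht (by linarith) (by linarith) (by linarith))

/-- The samples at `0, T, …, (m - 1) T` determine the coefficients, and for large `T` the curve is
nearly constant, relative to their size, on the windows of length `δ` following them. -/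
theorem exists_le_integral_polyCurve (m : ℕ) [NeZero m] (hδ : 0 < δ) (hμ : 0 < μ)
    (hP : IsPersistentlyExciting P δ μ) :
    ∃ L > (0 : ℝ), ∃ κ > (0 : ℝ), ∀ t ≥ 0, ∀ a : Fin m → n → ℝ,
      κ * ∑ k, a k ⬝ᵥ a k ≤
        ∫ τ in t..(t + L), polyCurve a (τ - t) ⬝ᵥ (P τ *ᵥ polyCurve a (τ - t)) := by
  obtain ⟨C, hC, hcoeff⟩ := exists_coeff_le_of_polyCurve_le (n := n) m
  obtain ⟨K, hnear⟩ := exists_polyCurve_sub_sample_le (n := n) m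
  obtain ⟨T, hT₁, hδT, hT⟩ : ∃ T : ℝ, 1 ≤ T ∧ δ ≤ T ∧ 4 * C * K * δ ^ 3 / μ ≤ T ^ 2 :=
    ((Filter.eventually_ge_atTop 1).and ((Filter.eventually_ge_atTop δ).and
      ((Filter.tendsto_pow_atTop two_ne_zero).eventually_ge_atTop _))).exists
  have hT₀ : 0 < T := by linarith
  have hm : (0 : ℝ) < m := mod_cast NeZero.pos m
  refine ⟨m * T, by positivity, μ / (4 * C), by positivity, fun t ht a => ?_⟩
  set S : ℝ := ∑ k : Fin m, (T ^ (k : ℕ) • a k) ⬝ᵥ (T ^ (k : ℕ) • a k)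
  set I : ℝ := ∫ τ in t..(t + m * T), polyCurve a (τ - t) ⬝ᵥ (P τ *ᵥ polyCurve a (τ - t))
  have hS : 0 ≤ S := Finset.sum_nonneg fun k _ => dotProduct_self_nonneg _
  have hsample (j : Fin m) : polyCurve a (T * (j : ℕ)) ⬝ᵥ polyCurve a (T * (j : ℕ))
      ≤ 2 / μ * (I + δ * (K * (δ / T) ^ 2 * S)) := by
    have hj : ((j : ℕ) : ℝ) + 1 ≤ m := mod_cast j.isLt
    have hwindow := hP.le_integral_of_near_sample hδ.le (continuous_polyCurve a) ht
      (by positivity) (by nlinarith : T * (j : ℕ) + δ ≤ m * T) (hnear a hT₀ hδT j)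
    rw [div_mul_eq_mul_div, le_div_iff₀ hμ]
    linarith
  have hcoeffT : S ≤ C * (2 / μ * (I + δ * (K * (δ / T) ^ 2 * S))) :=
    hcoeff _ _ fun j => by simpa only [polyCurve_mul] using hsample j
  have herror : C * (2 / μ * (δ * (K * (δ / T) ^ 2 * S))) ≤ S / 2 := by
    have hle : 4 * C * K * δ ^ 3 / μ / T ^ 2 ≤ 1 := div_le_one_of_le₀ hT (by positivity)
    calc C * (2 / μ * (δ * (K * (δ / T) ^ 2 * S)))
        = 4 * C * K * δ ^ 3 / μ / T ^ 2 * (S / 2) := by field_simp; ring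
      _ ≤ S / 2 := mul_le_of_le_one_left (by positivity) hle
  have hSI : μ / (4 * C) * S ≤ I := by
    rw [div_mul_eq_mul_div, div_le_iff₀ (by positivity), mul_comm μ, ← le_div_iff₀ hμ]
    linear_combination 2 * hcoeffT + 2 * herror
  exact (mul_le_mul_of_nonneg_left (sum_dotProduct_self_le_of_one_le hT₁ a)
    (by positivity)).trans hSI

end IsPersistentlyExciting

end PersistentExcitation

section Gramian

lemma dotProduct_integral_mulVec {n : Type*} [Fintype n] {M : ℝ → Matrix n n ℝ} {l r : ℝ}
    (hM : ContinuousOn M (Set.uIcc l r)) (u : n → ℝ) :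
    u ⬝ᵥ ((of fun p q => ∫ τ in l..r, M τ p q) *ᵥ u) = ∫ τ in l..r, u ⬝ᵥ (M τ *ᵥ u) := by
  have hint (p q) : IntervalIntegrable (fun τ => M τ p q) volume l r :=
    (continuousOn_pi.1 (continuousOn_pi.1 hM p) q).intervalIntegrable
  simp only [dotProduct, mulVec, of_apply, Finset.mul_sum, ← Fintype.sum_prod_type']
  rw [intervalIntegral.integral_finsetSum fun pq _ =>
    ((hint pq.1 pq.2).mul_const (u pq.2)).const_mul (u pq.1)]
  simp only [intervalIntegral.integral_const_mul, intervalIntegral.integral_mul_const]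

lemma posSemidef_integral_gram_sub {m n : Type*} [Fintype m] [Fintype n] [DecidableEq n]
    {D : ℝ → Matrix m n ℝ} {l r c μ : ℝ} (hc : 0 ≤ c) (hD : ContinuousOn D (Set.uIcc l r))
    (hμ : ∀ x, μ * (x ⬝ᵥ x) ≤ ∫ τ in l..r, (D τ *ᵥ x) ⬝ᵥ (D τ *ᵥ x)) :
    ((of fun p q => c * ∫ τ in l..r, ((D τ)ᵀ * D τ) p q)
      - (c * μ) • (1 : Matrix n n ℝ)).PosSemidef := by
  set G : Matrix n n ℝ := of fun p q => ∫ τ in l..r, ((D τ)ᵀ * D τ) p q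
  have hsmul : (of fun p q => c * ∫ τ in l..r, ((D τ)ᵀ * D τ) p q) = c • G := rfl
  have hG : G.IsHermitian := by
    ext p q
    simp only [G, conjTranspose_apply, of_apply, star_trivial, mul_apply, transpose_apply,
      mul_comm]
  have hDD : ContinuousOn (fun τ => (D τ)ᵀ * D τ) (Set.uIcc l r) := by
    rw [continuousOn_iff_continuous_domRestrict] at hD ⊢
    exact hD.matrix_transpose.matrix_mul hD
  rw [hsmul, mul_smul, ← smul_sub]
  refine PosSemidef.smul (.of_dotProduct_mulVec_nonneg ?_ fun x => ?_) hc
  · exact hG.sub (by simp [IsHermitian])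
  · rw [star_trivial, sub_mulVec, dotProduct_sub, smul_mulVec, one_mulVec, dotProduct_smul,
      smul_eq_mul, dotProduct_integral_mulVec hDD, sub_nonneg]
    simpa only [← mulVec_mulVec, dotProduct_mulVec, vecMul_transpose] using hμ x

end Gramian

section BearingProjections

lemma projMat_mulVec (y u : Fin 3 → ℝ) : projMat y *ᵥ u = u - (y ⬝ᵥ u) • y := by
  simp [projMat, sub_mulVec, vecMulVec_mulVec]

lemma dotProduct_projMat_mulVec (y u : Fin 3 → ℝ) :
    u ⬝ᵥ (projMat y *ᵥ u) = u ⬝ᵥ u - (y ⬝ᵥ u) ^ 2 := by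
  rw [projMat_mulVec, dotProduct_sub, dotProduct_smul, smul_eq_mul, dotProduct_comm u y, sq]

lemma dotProduct_projMat_mulVec_nonneg {y : Fin 3 → ℝ} (hy : y ⬝ᵥ y = 1) (u : Fin 3 → ℝ) :
    0 ≤ u ⬝ᵥ (projMat y *ᵥ u) := by
  have cauchySchwarz : (y ⬝ᵥ u) ^ 2 ≤ (y ⬝ᵥ y) * (u ⬝ᵥ u) := by
    simpa only [dotProduct, sq] using Finset.sum_mul_sq_le_sq_mul_sq Finset.univ y u
  rw [dotProduct_projMat_mulVec]
  linarith [hy ▸ cauchySchwarz]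

lemma projMat_mulVec_dotProduct_self {y : Fin 3 → ℝ} (hy : y ⬝ᵥ y = 1) (u : Fin 3 → ℝ) :
    (projMat y *ᵥ u) ⬝ᵥ (projMat y *ᵥ u) = u ⬝ᵥ (projMat y *ᵥ u) := by
  rw [dotProduct_projMat_mulVec, projMat_mulVec]
  simp only [sub_dotProduct, dotProduct_sub, smul_dotProduct, dotProduct_smul, hy, smul_eq_mul,
    dotProduct_comm u y]
  ring

lemma dotProduct_projMat_mulVec_rotate {Q : Matrix (Fin 3) (Fin 3) ℝ} (hQ : Qᵀ * Q = 1)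
    (y u : Fin 3 → ℝ) :
    (Q *ᵥ u) ⬝ᵥ (projMat (Q *ᵥ y) *ᵥ (Q *ᵥ u)) = u ⬝ᵥ (projMat y *ᵥ u) := by
  simp only [dotProduct_projMat_mulVec, mulVec_dotProduct_mulVec_of_transpose_mul_self hQ]

lemma continuous_projMat : Continuous projMat :=
  continuous_const.sub (continuous_id.matrix_vecMulVec continuous_id)

lemma isPersistentlyExciting_projMat {y : ℝ → Fin 3 → ℝ} {δ μ : ℝ} (hδ : 0 ≤ δ)
    (hy : ContinuousOn y (Set.Ici 0)) (hunit : ∀ t ≥ 0, y t ⬝ᵥ y t = 1)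
    (hPE : ∀ t ≥ 0, ((of fun a b => ∫ τ in t..(t + δ), projMat (y τ) a b)
      - μ • (1 : Matrix (Fin 3) (Fin 3) ℝ)).PosSemidef) :
    IsPersistentlyExciting (fun t => projMat (y t)) δ μ where
  continuousOn := continuous_projMat.comp_continuousOn hy
  nonneg t ht := dotProduct_projMat_mulVec_nonneg (hunit t ht)
  le_dotProduct_self t _ u := by
    rw [dotProduct_projMat_mulVec]
    exact sub_le_self _ (sq_nonneg _)
  le_integral t ht u := by
    have hcont : ContinuousOn (fun τ => projMat (y τ)) (Set.uIcc t (t + δ)) :=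
      (continuous_projMat.comp_continuousOn hy).mono
        (Set.ordConnected_Ici.uIcc_subset ht (add_nonneg ht hδ))
    have h := (hPE t ht).dotProduct_mulVec_nonneg u
    rwa [star_trivial, sub_mulVec, dotProduct_sub, smul_mulVec, one_mulVec, dotProduct_smul,
      smul_eq_mul, dotProduct_integral_mulVec hcont, sub_nonneg] at h

variable {N : ℕ}

lemma blkDiag_mulVec (f : Fin N → Matrix (Fin 3) (Fin 3) ℝ) (u : OutIdx N → ℝ) (i : Fin N)
    (j : Fin 3) : (blkDiag f *ᵥ u) (i, j) = (f i *ᵥ fun k => u (i, k)) j := by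
  simp [mulVec, dotProduct, blkDiag, Fintype.sum_prod_type, ite_mul]

lemma dotProduct_eq_sum_blocks (u v : OutIdx N → ℝ) :
    u ⬝ᵥ v = ∑ i, (fun k => u (i, k)) ⬝ᵥ (fun k => v (i, k)) :=
  Fintype.sum_prod_type _

lemma dotProduct_blkDiag_mulVec (f : Fin N → Matrix (Fin 3) (Fin 3) ℝ) (u : OutIdx N → ℝ) :
    u ⬝ᵥ (blkDiag f *ᵥ u) = ∑ i, (fun k => u (i, k)) ⬝ᵥ (f i *ᵥ fun k => u (i, k)) := by
  simp only [dotProduct_eq_sum_blocks, blkDiag_mulVec]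

lemma isPersistentlyExciting_blkDiag {P : Fin N → ℝ → Matrix (Fin 3) (Fin 3) ℝ} {δ μ : ℝ}
    (hδ : 0 ≤ δ) (hP : ∀ i, IsPersistentlyExciting (P i) δ μ) :
    IsPersistentlyExciting (fun t => blkDiag fun i => P i t) δ μ where
  continuousOn := by
    refine continuousOn_pi.2 fun p => continuousOn_pi.2 fun q => ?_
    by_cases hpq : p.1 = q.1
    · simpa only [blkDiag, if_pos hpq] using
        continuousOn_pi.1 (continuousOn_pi.1 (hP p.1).continuousOn p.2) q.2
    · simpa only [blkDiag, if_neg hpq] using continuousOn_const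
  nonneg t ht u := by
    rw [dotProduct_blkDiag_mulVec]
    exact Finset.sum_nonneg fun i _ => (hP i).nonneg t ht _
  le_dotProduct_self t ht u := by
    rw [dotProduct_blkDiag_mulVec, dotProduct_eq_sum_blocks]
    exact Finset.sum_le_sum fun i _ => (hP i).le_dotProduct_self t ht _
  le_integral t ht u := by
    simp only [dotProduct_blkDiag_mulVec]
    rw [intervalIntegral.integral_finsetSum fun i _ =>
      (hP i).intervalIntegrable continuous_const ht (add_nonneg ht hδ),
      dotProduct_eq_sum_blocks, Finset.mul_sum]
    exact Finset.sum_le_sum fun i _ => (hP i).le_integral t ht _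

end BearingProjections

section RotatedDynamics

lemma hasDerivWithinAt_mulVec {m n : Type*} [Finite m] [Fintype n] {M : ℝ → Matrix m n ℝ}
    {M' : Matrix m n ℝ} {w : ℝ → n → ℝ} {w' : n → ℝ} {s : Set ℝ} {t : ℝ}
    (hM : ∀ i j, HasDerivWithinAt (fun τ => M τ i j) (M' i j) s t)
    (hw : HasDerivWithinAt w w' s t) :
    HasDerivWithinAt (fun τ => M τ *ᵥ w τ) (M' *ᵥ w t + M t *ᵥ w') s t := by
  have := Fintype.ofFinite m
  rw [hasDerivWithinAt_pi] at hw ⊢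
  intro i
  refine (HasDerivWithinAt.fun_sum fun j _ => (hM i j).mul (hw j)).congr_deriv ?_
  simp only [Pi.add_apply, mulVec, dotProduct, Finset.sum_add_distrib]

lemma hasDerivWithinAt_rotate {n : Type*} [Fintype n] {R : ℝ → Matrix n n ℝ} {S : Matrix n n ℝ}
    {w : ℝ → n → ℝ} {u : n → ℝ} {s : Set ℝ} {t : ℝ}
    (hR : ∀ i j, HasDerivWithinAt (fun τ => R τ i j) ((R t * S) i j) s t)
    (hw : HasDerivWithinAt w (-(S *ᵥ w t) + u) s t) :
    HasDerivWithinAt (fun τ => R τ *ᵥ w τ) (R t *ᵥ u) s t := by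
  refine (hasDerivWithinAt_mulVec hR hw).congr_deriv ?_
  rw [mulVec_add, mulVec_neg, mulVec_mulVec, add_neg_cancel_left]

lemma eq_add_smul_add_smul_of_hasDerivWithinAt {E : Type*} [NormedAddCommGroup E]
    [NormedSpace ℝ E] {f v g : ℝ → E} {t τ : ℝ} (hτ : t ≤ τ)
    (hf : ∀ s ≥ t, HasDerivWithinAt f (v s) (Set.Ici t) s)
    (hv : ∀ s ≥ t, HasDerivWithinAt v (g s) (Set.Ici t) s)
    (hg : ∀ s ≥ t, HasDerivWithinAt g 0 (Set.Ici t) s) :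
    f τ = f t + (τ - t) • v t + ((τ - t) ^ 2 / 2) • g t := by
  -- The second order Taylor expansion of `f` at `s`, evaluated at `τ`, does not depend on `s`.
  set φ : ℝ → E := fun s => f s + (τ - s) • v s + ((τ - s) ^ 2 / 2) • g s
  have hφ : ∀ s ≥ t, HasDerivWithinAt φ 0 (Set.Ici t) s := fun s hs => by
    have hlin : HasDerivWithinAt (fun s => τ - s) (-1) (Set.Ici t) s :=
      (hasDerivWithinAt_id s _).const_sub τ
    refine (((hf s hs).add (hlin.smul (hv s hs))).add
      (((hlin.pow 2).div_const 2).smul (hg s hs))).congr_deriv ?_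
    module
  have hconst := constant_of_has_deriv_right_zero
    (fun s hs => (hφ s hs.1).continuousWithinAt.mono Set.Icc_subset_Ici_self)
    (fun s hs => (hφ s hs.1).mono (Set.Ici_subset_Ici.2 hs.1)) τ ⟨hτ, le_rfl⟩
  simpa [φ] using hconst

end RotatedDynamics

section LandmarkSystem

variable {N : ℕ}

/-- The block of the state that belongs to landmark `i`. -/
def landmark (x : StateIdx N → ℝ) (i : Fin N) : Fin 3 → ℝ := fun k => x (.inl (i, k))

/-- The velocity block of the state. -/
def velocity (x : StateIdx N → ℝ) : Fin 3 → ℝ := fun k => x (.inr (.inl k))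

/-- The gravity block of the state. -/
def gravity (x : StateIdx N → ℝ) : Fin 3 → ℝ := fun k => x (.inr (.inr k))

lemma dotProduct_self_eq_blocks (x : StateIdx N → ℝ) :
    x ⬝ᵥ x = ∑ i, landmark x i ⬝ᵥ landmark x i + velocity x ⬝ᵥ velocity x
      + gravity x ⬝ᵥ gravity x := by
  simp only [landmark, velocity, gravity, dotProduct, Fintype.sum_sum_type,
    Fintype.sum_prod_type, add_assoc]

lemma Amat_eq_fromBlocks (ω : Fin 3 → ℝ) :
    Amat N ω = fromBlocks (blkDiag fun _ => -skew ω) (fromCols (-Gam N) 0) 0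
      (fromBlocks (-skew ω) 1 0 (-skew ω)) :=
  rfl

lemma Gam_mulVec (v : Fin 3 → ℝ) (i : Fin N) (j : Fin 3) : (Gam N *ᵥ v) (i, j) = v j := by
  simp [Gam, mulVec, dotProduct]

lemma landmark_Amat_mulVec (ω : Fin 3 → ℝ) (x : StateIdx N → ℝ) (i : Fin N) :
    landmark (Amat N ω *ᵥ x) i = -(skew ω *ᵥ landmark x i) + -velocity x := by
  ext j
  unfold landmark velocity
  simp [Amat_eq_fromBlocks, fromBlocks_mulVec, fromCols_mulVec, neg_mulVec,
    blkDiag_mulVec, Gam_mulVec]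

lemma velocity_Amat_mulVec (ω : Fin 3 → ℝ) (x : StateIdx N → ℝ) :
    velocity (Amat N ω *ᵥ x) = -(skew ω *ᵥ velocity x) + gravity x := by
  ext j
  unfold velocity gravity
  simp [Amat_eq_fromBlocks, fromBlocks_mulVec, neg_mulVec, Function.comp_def]

lemma gravity_Amat_mulVec (ω : Fin 3 → ℝ) (x : StateIdx N → ℝ) :
    gravity (Amat N ω *ᵥ x) = -(skew ω *ᵥ gravity x) := by
  ext j
  unfold gravity
  simp [Amat_eq_fromBlocks, fromBlocks_mulVec, neg_mulVec, Function.comp_def]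

/-- The landmark blocks of the state `x`, each rotated by `Q` (into the inertial frame when `Q` is
the attitude). -/
def rotatedLandmarks (Q : Matrix (Fin 3) (Fin 3) ℝ) (x : StateIdx N → ℝ) : OutIdx N → ℝ :=
  fun p => (Q *ᵥ landmark x p.1) p.2

/-- Coefficients, as in `polyCurve`, of the quadratic motion of the landmarks in the inertial
frame, for attitude `Q` and state `x` at the initial time. -/
def inertialCoeff (Q : Matrix (Fin 3) (Fin 3) ℝ) (x : StateIdx N → ℝ) : Fin 3 → OutIdx N → ℝ :=
  ![rotatedLandmarks Q x, fun p => (Q *ᵥ -velocity x) p.2,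
    fun p => (Q *ᵥ (1 / 2 : ℝ) • -gravity x) p.2]

lemma dotProduct_self_le_sum_inertialCoeff (hN : 0 < N) {Q : Matrix (Fin 3) (Fin 3) ℝ}
    (hQ : Qᵀ * Q = 1) (x : StateIdx N → ℝ) :
    1 / 4 * (x ⬝ᵥ x) ≤ ∑ k, inertialCoeff Q x k ⬝ᵥ inertialCoeff Q x k := by
  have hnorm (u) := mulVec_dotProduct_mulVec_of_transpose_mul_self hQ u u
  have hposition : inertialCoeff Q x 0 ⬝ᵥ inertialCoeff Q x 0
      = ∑ i, landmark x i ⬝ᵥ landmark x i := by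
    rw [dotProduct_eq_sum_blocks]
    exact Finset.sum_congr rfl fun i _ => hnorm (landmark x i)
  have hvelocity : inertialCoeff Q x 1 ⬝ᵥ inertialCoeff Q x 1
      = N * (velocity x ⬝ᵥ velocity x) := by
    rw [dotProduct_eq_sum_blocks]
    exact (Finset.sum_congr rfl fun i _ => hnorm (-velocity x)).trans (by simp)
  have hgravity : inertialCoeff Q x 2 ⬝ᵥ inertialCoeff Q x 2
      = N * (1 / 4 * (gravity x ⬝ᵥ gravity x)) := by
    rw [dotProduct_eq_sum_blocks]
    refine (Finset.sum_congr rfl fun i _ => hnorm ((1 / 2 : ℝ) • -gravity x)).trans ?_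
    simp only [smul_dotProduct, dotProduct_smul, neg_dotProduct_neg, Finset.sum_const,
      Finset.card_univ, Fintype.card_fin, nsmul_eq_mul, smul_eq_mul]
    ring
  have hlandmark : 0 ≤ ∑ i, landmark x i ⬝ᵥ landmark x i :=
    Finset.sum_nonneg fun i _ => dotProduct_self_nonneg _
  have hN₁ : (1 : ℝ) ≤ N := mod_cast hN
  rw [Fin.sum_univ_three, hposition, hvelocity, hgravity, dotProduct_self_eq_blocks]
  nlinarith [dotProduct_self_nonneg (velocity x), dotProduct_self_nonneg (gravity x)]

lemma rotatedLandmarks_eq_polyCurve {ω : ℝ → Fin 3 → ℝ} {R : ℝ → Matrix (Fin 3) (Fin 3) ℝ}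
    {w : ℝ → StateIdx N → ℝ} {t τ : ℝ} (hτ : t ≤ τ)
    (hR : ∀ s ≥ t, ∀ i j, HasDerivWithinAt (fun s => R s i j) ((R s * skew (ω s)) i j)
      (Set.Ici t) s)
    (hw : ∀ s ≥ t, HasDerivWithinAt w (Amat N (ω s) *ᵥ w s) (Set.Ici t) s) :
    rotatedLandmarks (R τ) (w τ) = polyCurve (inertialCoeff (R t) (w t)) (τ - t) := by
  have hblock (s) (hs : t ≤ s) := hasDerivWithinAt_pi.1 (hw s hs)
  have hlandmark (i s) (hs : s ≥ t) : HasDerivWithinAt (fun s => R s *ᵥ landmark (w s) i)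
      (R s *ᵥ -velocity (w s)) (Set.Ici t) s :=
    hasDerivWithinAt_rotate (hR s hs) <| landmark_Amat_mulVec (ω s) (w s) i ▸
      hasDerivWithinAt_pi.2 fun k => hblock s hs (.inl (i, k))
  have hvelocity (s) (hs : s ≥ t) : HasDerivWithinAt (fun s => R s *ᵥ -velocity (w s))
      (R s *ᵥ -gravity (w s)) (Set.Ici t) s := by
    refine hasDerivWithinAt_rotate (hR s hs) ?_
    rw [mulVec_neg, ← neg_add, ← velocity_Amat_mulVec]
    exact hasDerivWithinAt_pi.2 fun k => (hblock s hs (.inr (.inl k))).neg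
  have hgravity (s) (hs : s ≥ t) : HasDerivWithinAt (fun s => R s *ᵥ -gravity (w s)) 0
      (Set.Ici t) s := by
    rw [← mulVec_zero (R s)]
    refine hasDerivWithinAt_rotate (hR s hs) ?_
    rw [mulVec_neg, add_zero, ← gravity_Amat_mulVec]
    exact hasDerivWithinAt_pi.2 fun k => (hblock s hs (.inr (.inr k))).neg
  ext ⟨i, k⟩
  have htaylor := congrFun
    (eq_add_smul_add_smul_of_hasDerivWithinAt hτ (hlandmark i) hvelocity hgravity) k
  simp only [mulVec_neg, Pi.add_apply, Pi.smul_apply, Pi.neg_apply, smul_eq_mul] at htaylor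
  simp only [rotatedLandmarks, htaylor, polyCurve, inertialCoeff, mulVec_neg, mulVec_smul,
    Fin.sum_univ_three, Fin.val_zero, Fin.val_one, Fin.val_two, cons_val, Pi.add_apply,
    Pi.smul_apply, Pi.neg_apply, smul_eq_mul]
  ring

lemma Cmat_mulVec (Rc : Matrix (Fin 3) (Fin 3) ℝ) (z : Fin N → Fin 3 → ℝ) (x : StateIdx N → ℝ) :
    Cmat N Rc z *ᵥ x = blkDiag (fun i => projMat (Rc *ᵥ z i)) *ᵥ (x ∘ Sum.inl) := by
  ext p
  simp [Cmat, mulVec, dotProduct, Fintype.sum_sum_type]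

lemma Cmat_mulVec_dotProduct_self {Q Rc : Matrix (Fin 3) (Fin 3) ℝ} (hQ : Qᵀ * Q = 1)
    {z : Fin N → Fin 3 → ℝ} (hz : ∀ i, (Rc *ᵥ z i) ⬝ᵥ (Rc *ᵥ z i) = 1) (x : StateIdx N → ℝ) :
    (Cmat N Rc z *ᵥ x) ⬝ᵥ (Cmat N Rc z *ᵥ x) =
      rotatedLandmarks Q x ⬝ᵥ
        (blkDiag (fun i => projMat (Q *ᵥ (Rc *ᵥ z i))) *ᵥ rotatedLandmarks Q x) := by
  rw [dotProduct_blkDiag_mulVec, Cmat_mulVec, dotProduct_eq_sum_blocks]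
  refine Finset.sum_congr rfl fun i _ => ?_
  simp only [blkDiag_mulVec]
  exact (projMat_mulVec_dotProduct_self (hz i) (landmark x i)).trans
    (dotProduct_projMat_mulVec_rotate hQ _ _).symm

lemma continuousOn_Cmat {Rc : Matrix (Fin 3) (Fin 3) ℝ} {z : Fin N → ℝ → Fin 3 → ℝ} {s : Set ℝ}
    (hz : ∀ i, ContinuousOn (z i) s) : ContinuousOn (fun τ => Cmat N Rc fun i => z i τ) s := by
  refine continuousOn_pi.2 fun p => continuousOn_pi.2 fun q => ?_
  rcases q with q | _
  · by_cases hpq : p.1 = q.1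
    · have hproj : ContinuousOn (fun τ => projMat (Rc *ᵥ z p.1 τ)) s :=
        (continuous_projMat.comp (continuous_const.matrix_mulVec continuous_id)).comp_continuousOn
          (hz p.1)
      simpa only [Cmat, Sum.elim_inl, blkDiag, if_pos hpq] using
        continuousOn_pi.1 (continuousOn_pi.1 hproj p.2) q.2
    · simpa only [Cmat, Sum.elim_inl, blkDiag, if_neg hpq] using continuousOn_const
  · exact continuousOn_const

end LandmarkSystem

section UniformObservability

variable {N : ℕ}

theorem exists_le_integral_output (hN : 0 < N) {ω : ℝ → Fin 3 → ℝ}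
    {R : ℝ → Matrix (Fin 3) (Fin 3) ℝ} (hRorth : ∀ t ≥ 0, (R t)ᵀ * R t = 1)
    (hRdyn : ∀ t ≥ 0, ∀ i j, HasDerivWithinAt (fun s => R s i j) ((R t * skew (ω t)) i j)
      (Set.Ici 0) t)
    {Rc : Matrix (Fin 3) (Fin 3) ℝ} (hRc : Rcᵀ * Rc = 1) {z : Fin N → ℝ → Fin 3 → ℝ}
    (hzcont : ∀ i, ContinuousOn (z i) (Set.Ici 0)) (hzunit : ∀ i, ∀ t ≥ 0, z i t ⬝ᵥ z i t = 1)
    {δ₀ μ₀ : ℝ} (hδ₀ : 0 < δ₀) (hμ₀ : 0 < μ₀)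
    (hPE : ∀ i, ∀ t ≥ 0,
      ((of fun a b => ∫ τ in t..(t + δ₀), projMat (R τ *ᵥ (Rc *ᵥ z i τ)) a b)
        - μ₀ • (1 : Matrix (Fin 3) (Fin 3) ℝ)).PosSemidef) :
    ∃ δ > 0, ∃ μ > (0 : ℝ), ∀ t ≥ 0, ∀ w : ℝ → StateIdx N → ℝ,
      (∀ s ≥ t, HasDerivWithinAt w (Amat N (ω s) *ᵥ w s) (Set.Ici t) s) →
      μ * (w t ⬝ᵥ w t) ≤ ∫ τ in t..(t + δ),
        (Cmat N Rc (fun i => z i τ) *ᵥ w τ) ⬝ᵥ (Cmat N Rc (fun i => z i τ) *ᵥ w τ) := by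
  have hRcont : ContinuousOn R (Set.Ici 0) :=
    continuousOn_pi.2 fun i => continuousOn_pi.2 fun j t ht => (hRdyn t ht i j).continuousWithinAt
  have hbody (i t) (ht : t ≥ 0) : (Rc *ᵥ z i t) ⬝ᵥ (Rc *ᵥ z i t) = 1 := by
    rw [mulVec_dotProduct_mulVec_of_transpose_mul_self hRc, hzunit i t ht]
  have hbearing (i) : ContinuousOn (fun t => R t *ᵥ (Rc *ᵥ z i t)) (Set.Ici 0) := by
    have hz := hzcont i
    rw [continuousOn_iff_continuous_domRestrict] at hRcont hz ⊢
    exact hRcont.matrix_mulVec (continuous_const.matrix_mulVec hz)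
  have hΛ := isPersistentlyExciting_blkDiag hδ₀.le fun i =>
    isPersistentlyExciting_projMat hδ₀.le (hbearing i)
      (fun t ht => by rw [mulVec_dotProduct_mulVec_of_transpose_mul_self (hRorth t ht),
        hbody i t ht]) (hPE i)
  obtain ⟨δ, hδ, κ, hκ, hobs⟩ := hΛ.exists_le_integral_polyCurve 3 hδ₀ hμ₀
  refine ⟨δ, hδ, κ * (1 / 4), by positivity, fun t ht w hw => ?_⟩
  set q : ℝ → OutIdx N → ℝ := polyCurve (inertialCoeff (R t) (w t))
  calc κ * (1 / 4) * (w t ⬝ᵥ w t)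
      ≤ κ * ∑ k, inertialCoeff (R t) (w t) k ⬝ᵥ inertialCoeff (R t) (w t) k := by
        rw [mul_assoc]
        gcongr
        exact dotProduct_self_le_sum_inertialCoeff hN (hRorth t ht) (w t)
    _ ≤ ∫ τ in t..(t + δ), q (τ - t) ⬝ᵥ
          (blkDiag (fun i => projMat (R τ *ᵥ (Rc *ᵥ z i τ))) *ᵥ q (τ - t)) := hobs t ht _
    _ = ∫ τ in t..(t + δ),
          (Cmat N Rc (fun i => z i τ) *ᵥ w τ) ⬝ᵥ (Cmat N Rc (fun i => z i τ) *ᵥ w τ) :=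
        intervalIntegral.integral_congr fun τ hτ => by
          rw [Set.uIcc_of_le (by linarith)] at hτ
          have hτ₀ : 0 ≤ τ := ht.le.trans hτ.1
          rw [Cmat_mulVec_dotProduct_self (hRorth τ hτ₀) (fun i => hbody i τ hτ₀),
            rotatedLandmarks_eq_polyCurve hτ.1 (fun s hs i j =>
              (hRdyn s (ht.le.trans hs) i j).mono (Set.Ici_subset_Ici.2 ht)) hw]

theorem pair_AC_uniformly_observable_general
    (hN : 0 < N) (ω : ℝ → Fin 3 → ℝ) (R : ℝ → Matrix (Fin 3) (Fin 3) ℝ)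
    (hRorth : ∀ t ≥ 0, (R t)ᵀ * R t = 1)
    (hRdyn : ∀ t ≥ 0, ∀ i j, HasDerivWithinAt (fun s => R s i j) ((R t * skew (ω t)) i j)
      (Set.Ici 0) t)
    (Rc : Matrix (Fin 3) (Fin 3) ℝ) (hRc : Rcᵀ * Rc = 1) (z : Fin N → ℝ → Fin 3 → ℝ)
    (hzcont : ∀ i, ContinuousOn (z i) (Set.Ici 0))
    (hzunit : ∀ i, ∀ t ≥ 0, ∑ k, (z i t k) ^ 2 = 1)
    (δ₀ μ₀ : ℝ) (hδ₀ : 0 < δ₀) (hμ₀ : 0 < μ₀)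
    (hPE : ∀ i, ∀ t ≥ 0,
      ((of fun a b => ∫ τ in t..(t + δ₀), projMat (R τ *ᵥ (Rc *ᵥ z i τ)) a b)
        - μ₀ • (1 : Matrix (Fin 3) (Fin 3) ℝ)).PosSemidef)
    (Φ : ℝ → ℝ → Matrix (StateIdx N) (StateIdx N) ℝ)
    (hΦdyn : ∀ τ ≥ 0, ∀ t ≥ 0, ∀ p q,
      HasDerivWithinAt (fun s => Φ s τ p q) ((Amat N (ω t) * Φ t τ) p q) (Set.Ici 0) t)
    (hΦid : ∀ τ ≥ 0, Φ τ τ = 1) :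
    ∃ δ > 0, ∃ μ > (0 : ℝ), ∀ t ≥ 0,
      ((of fun p q => (1 / δ) * ∫ τ in t..(t + δ),
          ((Φ τ t)ᵀ * (Cmat N Rc (fun i => z i τ))ᵀ * Cmat N Rc (fun i => z i τ) * Φ τ t) p q)
        - μ • (1 : Matrix (StateIdx N) (StateIdx N) ℝ)).PosSemidef := by
  obtain ⟨δ, hδ, μ, hμ, hobs⟩ := exists_le_integral_output hN hRorth hRdyn hRc hzcont
    (fun i t ht => by simpa only [dotProduct, sq] using hzunit i t ht) hδ₀ hμ₀ hPE
  refine ⟨δ, hδ, 1 / δ * μ, by positivity, fun t ht => ?_⟩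
  have hΦcont : ContinuousOn (fun τ => Φ τ t) (Set.Ici 0) := continuousOn_pi.2 fun p =>
    continuousOn_pi.2 fun q s hs => (hΦdyn t ht s hs p q).continuousWithinAt
  have hCΦ : ContinuousOn (fun τ => Cmat N Rc (fun i => z i τ) * Φ τ t) (Set.uIcc t (t + δ)) := by
    have hC := continuousOn_Cmat (Rc := Rc) hzcont
    rw [continuousOn_iff_continuous_domRestrict] at hΦcont hC
    exact (continuousOn_iff_continuous_domRestrict.2 (hC.matrix_mul hΦcont)).mono
      (Set.ordConnected_Ici.uIcc_subset ht (add_nonneg ht hδ.le))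
  have hΦsol (x : StateIdx N → ℝ) (s) (hs : s ≥ t) : HasDerivWithinAt (fun τ => Φ τ t *ᵥ x)
      (Amat N (ω s) *ᵥ (Φ s t *ᵥ x)) (Set.Ici t) s := by
    simpa [mulVec_mulVec] using (hasDerivWithinAt_mulVec (hΦdyn t ht s (ht.le.trans hs))
      (hasDerivWithinAt_const s _ x)).mono (Set.Ici_subset_Ici.2 ht)
  have hgram := posSemidef_integral_gram_sub (one_div_pos.2 hδ).le hCΦ fun x => by
    simpa only [hΦid t ht, one_mulVec, mulVec_mulVec] using hobs t ht _ (hΦsol x)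
  simpa only [transpose_mul, Matrix.mul_assoc] using hgram

end UniformObservability

/-- under the persistency-of-excitation condition on the bearing
measurements, the pair `(A, C)` of the landmark-position/velocity LTV system is
uniformly observable. -/
theorem pair_AC_uniformly_observable
    (N : ℕ) (hN : 3 ≤ N)
    (ω : ℝ → Fin 3 → ℝ)
    (hωuc : UniformContinuousOn ω (Set.Ici 0))
    (hωbnd : ∃ b : ℝ, ∀ t ≥ (0:ℝ), ‖ω t‖ ≤ b)
    (R : ℝ → Matrix (Fin 3) (Fin 3) ℝ)
    (hRSO : ∀ t ≥ (0:ℝ), SO3 (R t))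
    (hRdyn : ∀ t ≥ (0:ℝ), ∀ i j, HasDerivWithinAt (fun s => R s i j)
      ((R t * skew (ω t)) i j) (Set.Ici 0) t)
    (Rc : Matrix (Fin 3) (Fin 3) ℝ) (hRc : SO3 Rc)
    (z : Fin N → ℝ → Fin 3 → ℝ)
    (hzcont : ∀ i, Continuous (z i))
    (hzunit : ∀ i, ∀ t ≥ (0:ℝ), ∑ k, (z i t k) ^ 2 = 1)
    (δ₀ μ₀ : ℝ) (hδ₀ : 0 < δ₀) (hμ₀ : 0 < μ₀)
    (hPE : ∀ i, ∀ t ≥ (0:ℝ),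
      ((Matrix.of fun a b => ∫ τ in t..(t + δ₀), projMat (R τ *ᵥ (Rc *ᵥ z i τ)) a b)
        - μ₀ • (1 : Matrix (Fin 3) (Fin 3) ℝ)).PosSemidef)
    (Φ : ℝ → ℝ → Matrix (StateIdx N) (StateIdx N) ℝ)
    (hΦcont : ∀ p q, Continuous fun tτ : ℝ × ℝ => Φ tτ.1 tτ.2 p q)
    (hΦdyn : ∀ τ ≥ (0:ℝ), ∀ t ≥ (0:ℝ), ∀ p q,
      HasDerivWithinAt (fun s => Φ s τ p q)
        ((Amat N (ω t) * Φ t τ) p q) (Set.Ici 0) t)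
    (hΦid : ∀ τ ≥ (0:ℝ), Φ τ τ = 1) :
    ∃ δ > (0:ℝ), ∃ μ > (0:ℝ), ∀ t ≥ (0:ℝ),
      ((Matrix.of fun p q =>
          (1 / δ) * ∫ τ in t..(t + δ),
            ((Φ τ t)ᵀ * (Cmat N Rc (fun i => z i τ))ᵀ
              * Cmat N Rc (fun i => z i τ) * Φ τ t) p q)
        - μ • (1 : Matrix (StateIdx N) (StateIdx N) ℝ)).PosSemidef :=
  pair_AC_uniformly_observable_general (by omega) ω R (fun t ht => (hRSO t ht).2.1) hRdyn Rc hRc.2.1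
    z (fun i => (hzcont i).continuousOn) hzunit δ₀ μ₀ hδ₀ hμ₀ hPE Φ hΦdyn hΦid
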